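/- Let F ∈ ℤ[x₁,…,x_m] be a homogeneous cubic form, p a prime, and c ∈ ℤ^m with at least one coordinate of c not divisible by p. Suppose there is no x ∈ 𝔽_p^m with F(x) = 0, c·x = 0, ∇F(x) ≠ 0, and ∇F(x) = λ·c for some λ ∈ 𝔽_p (where F, c are reduced mod p). Then S_c(p^l) = 0 for every integer l ≥ 2. -/

import Mathlib

/-!
Write `n = p ^ l` and `t = p ^ (l - 1)`, so that `t ^ 2 = 0` in `ZMod n`. For `b : ZMod n` and
`y : Fin m → ZMod n` the substitution `a ↦ a (1 + t b)`, `x ↦ x + t y` permutes the range of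
summation, and by first-order Taylor expansion it multiplies the term at `(a, x)` by
`e_n (b · t a F(x) + ∑ i, y i · t (a ∂ᵢF(x) + c i))`. Averaging over all `(b, y)` kills the term
by orthogonality of characters, unless `F(x) ≡ 0` and `a ∇F(x) + c ≡ 0` modulo `p`. In that
exceptional case `∇F(x) ≡ -a⁻¹ c` is nonzero modulo `p`, and Euler's identity gives
`c · x ≡ -a ∇F(x) · x = -3 a F(x) ≡ 0`, so the reduction of `x` is a point which the hypothesis
excludes. The Taylor expansion has integral coefficients, hence no prime needs a separate
treatment.
-/


open scoped BigOperators

/-- `e_n(t) := exp(2πi t/n)` for `t : ZMod n`, using the canonical lift `t.val`. -/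
noncomputable def en (n : ℕ) (t : ZMod n) : ℂ :=
  Complex.exp (2 * Real.pi * Complex.I * (t.val : ℂ) / (n : ℂ))

/-- The complete exponential sum `S_c(n)` for a cubic form `F` and `c ∈ ℤ^m`
(reduced mod `n`); junk value `0` at `n = 0`. -/
noncomputable def Sc {m : ℕ} (F : MvPolynomial (Fin m) ℤ) (c : Fin m → ℤ) (n : ℕ) : ℂ :=
  if h : n = 0 then 0 else
    haveI : NeZero n := ⟨h⟩
    ∑ a : (ZMod n)ˣ, ∑ x : Fin m → ZMod n,
      en n ((a : ZMod n) * MvPolynomial.aeval x F + ∑ i, (c i : ZMod n) * x i)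

/-- First-order Taylor expansion along an increment that squares to zero. -/
lemma aeval_add_of_sq_zero {m : ℕ} {R : Type*} [CommRing R] (F : MvPolynomial (Fin m) ℤ)
    (x y : Fin m → R) (t : R) (ht : t * t = 0) :
    MvPolynomial.aeval (fun i => x i + t * y i) F =
      MvPolynomial.aeval x F + t * ∑ i, MvPolynomial.aeval x (MvPolynomial.pderiv i F) * y i := by
  induction F using MvPolynomial.induction_on with
  | C r => simp
  | add f g hf hg =>
    simp only [map_add, hf, hg, add_mul, Finset.sum_add_distrib]
    ring
  | mul_X f j hf =>
    have h : ∑ i, MvPolynomial.aeval x (MvPolynomial.pderiv i (f * MvPolynomial.X j)) * y i =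
        (∑ i, MvPolynomial.aeval x (MvPolynomial.pderiv i f) * y i) * x j +
          MvPolynomial.aeval x f * y j := by
      simp only [Derivation.leibniz, MvPolynomial.pderiv_X, smul_eq_mul, map_add, map_mul,
        MvPolynomial.aeval_X, add_mul, Finset.sum_add_distrib, Finset.sum_mul]
      rw [add_comm]
      congr 1
      · exact Finset.sum_congr rfl fun i _ => by ring
      · rw [Finset.sum_eq_single j]
        · simp
        · intro i _ hij
          simp [hij.symm]
        · simp
    rw [h]
    simp only [map_mul, MvPolynomial.aeval_X, hf]
    linear_combination
      (∑ i, MvPolynomial.aeval x (MvPolynomial.pderiv i f) * y i) * y j * ht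

lemma en_eq_stdAddChar (n : ℕ) [NeZero n] (z : ZMod n) : en n z = ZMod.stdAddChar z := by
  rw [ZMod.stdAddChar_apply, ZMod.toCircle_apply, en]

/-- Orthogonality on `ZMod n × (ZMod n)^m`: a character given by a linear form with a nonzero
coefficient sums to zero. -/
lemma sum_linear_eq_zero {m n : ℕ} [NeZero n] (u : ZMod n) (v : Fin m → ZMod n)
    (h : ¬ (u = 0 ∧ ∀ i, v i = 0)) :
    ∑ q : ZMod n × (Fin m → ZMod n),
      (ZMod.stdAddChar (u * q.1 + ∑ i, v i * q.2 i) : ℂ) = 0 := by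
  let L : ZMod n × (Fin m → ZMod n) →+ ZMod n :=
    { toFun := fun q => u * q.1 + ∑ i, v i * q.2 i
      map_zero' := by simp
      map_add' := by
        intro q r
        simp only [Prod.fst_add, Prod.snd_add, Pi.add_apply, mul_add, Finset.sum_add_distrib]
        ring }
  have hne : (ZMod.stdAddChar (N := n)).compAddMonoidHom L ≠ 0 := by
    intro h0
    have h1 : ∀ q : ZMod n × (Fin m → ZMod n),
        (ZMod.stdAddChar (u * q.1 + ∑ i, v i * q.2 i) : ℂ) = 1 := fun q => by
      simpa [L] using DFunLike.congr_fun h0 q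
    apply h
    constructor
    · by_contra hu
      refine ZMod.isPrimitive_stdAddChar n hu ?_
      ext b
      simpa [AddChar.mulShift_apply] using h1 (b, 0)
    · intro i
      by_contra hv
      refine ZMod.isPrimitive_stdAddChar n hv ?_
      ext b
      have := h1 (0, Pi.single i b)
      simpa [AddChar.mulShift_apply, Pi.single_apply] using this
  exact AddChar.sum_eq_zero_iff_ne_zero.mpr hne

lemma cast_eq_zero_of_pow_mul {p : ℕ} (hp : p.Prime) (k : ℕ) (z : ZMod (p ^ (k + 1)))
    (h : (p : ZMod (p ^ (k + 1))) ^ k * z = 0) :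
    ZMod.castHom (dvd_pow_self p k.succ_ne_zero) (ZMod p) z = 0 := by
  obtain ⟨w, rfl⟩ := ZMod.intCast_surjective z
  rw [map_intCast, ZMod.intCast_zmod_eq_zero_iff_dvd]
  have h' : (((p : ℤ) ^ k * w : ℤ) : ZMod (p ^ (k + 1))) = 0 := by
    push_cast
    exact h
  rw [ZMod.intCast_zmod_eq_zero_iff_dvd] at h'
  push_cast at h'
  rw [pow_succ] at h'
  exact Int.dvd_of_mul_dvd_mul_left (pow_ne_zero k (by exact_mod_cast hp.ne_zero)) h'

theorem stmt6 (m : ℕ) (F : MvPolynomial (Fin m) ℤ) (hF : F.IsHomogeneous 3)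
    (p : ℕ) (hp : p.Prime) (c : Fin m → ℤ) (hc : ∃ i, ¬ (p : ℤ) ∣ c i)
    (hno : ¬ ∃ x : Fin m → ZMod p,
      MvPolynomial.aeval x F = 0 ∧
      (∑ i, (c i : ZMod p) * x i) = 0 ∧
      ¬ (∀ i, MvPolynomial.aeval x (MvPolynomial.pderiv i F) = 0) ∧
      ∃ lam : ZMod p, ∀ i,
        MvPolynomial.aeval x (MvPolynomial.pderiv i F) = lam * (c i : ZMod p)) :
    ∀ l : ℕ, 2 ≤ l → Sc F c (p ^ l) = 0 := by
  intro l hl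
  obtain ⟨k, rfl⟩ : ∃ k, l = k + 1 := ⟨l - 1, by omega⟩
  have hn : p ^ (k + 1) ≠ 0 := pow_ne_zero _ hp.ne_zero
  have : NeZero (p ^ (k + 1)) := ⟨hn⟩
  have : Fact p.Prime := ⟨hp⟩
  rw [Sc, dif_neg hn]
  simp only [en_eq_stdAddChar]
  set t : ZMod (p ^ (k + 1)) := (p : ZMod (p ^ (k + 1))) ^ k with ht_def
  have ht : t * t = 0 := by
    have h0 : (p : ZMod (p ^ (k + 1))) ^ (k + 1) = 0 := by
      rw [← Nat.cast_pow, ZMod.natCast_self]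
    rw [ht_def, ← pow_add]
    exact pow_eq_zero_of_le (by omega) h0
  have hcoef : ∀ (a : (ZMod (p ^ (k + 1)))ˣ) (x : Fin m → ZMod (p ^ (k + 1))),
      ¬ (t * (a * MvPolynomial.aeval x F) = 0 ∧
        ∀ i, t * (a * MvPolynomial.aeval x (MvPolynomial.pderiv i F) + c i) = 0) := by
    rintro a x ⟨h1, h2⟩
    set φ := ZMod.castHom (dvd_pow_self p k.succ_ne_zero) (ZMod p)
    have hφ : ∀ P : MvPolynomial (Fin m) ℤ,
        φ (MvPolynomial.aeval x P) = MvPolynomial.aeval (fun i => φ (x i)) P := fun P =>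
      MvPolynomial.comp_aeval_apply x φ.toIntAlgHom P
    have ha : φ a ≠ 0 := (a.isUnit.map φ).ne_zero
    have e1 : MvPolynomial.aeval (fun i => φ (x i)) F = 0 := by
      have := cast_eq_zero_of_pow_mul hp k _ h1
      rw [map_mul, hφ] at this
      exact (mul_eq_zero.mp this).resolve_left ha
    have e2 : ∀ i, φ a * MvPolynomial.aeval (fun i => φ (x i)) (MvPolynomial.pderiv i F)
        + (c i : ZMod p) = 0 := fun i => by
      have := cast_eq_zero_of_pow_mul hp k _ (h2 i)
      rwa [map_add, map_mul, hφ, map_intCast] at this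
    refine hno ⟨fun i => φ (x i), e1, ?_, ?_, -(φ a)⁻¹, fun i => ?_⟩
    · have euler := congrArg (MvPolynomial.aeval (fun i => φ (x i))) hF.sum_X_mul_pderiv
      simp only [map_sum, map_mul, MvPolynomial.aeval_X, map_nsmul, e1, smul_zero] at euler
      have : ∑ i, (c i : ZMod p) * φ (x i) = -φ a * ∑ i, φ (x i) *
          MvPolynomial.aeval (fun i => φ (x i)) (MvPolynomial.pderiv i F) := by
        rw [Finset.mul_sum]
        exact Finset.sum_congr rfl fun i _ => by linear_combination φ (x i) * e2 i
      rw [this, euler, mul_zero]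
    · intro h0
      obtain ⟨i, hi⟩ := hc
      apply hi
      rw [← ZMod.intCast_zmod_eq_zero_iff_dvd]
      simpa [h0 i] using e2 i
    · field_simp
      linear_combination e2 i
  have hunit : ∀ b : ZMod (p ^ (k + 1)), IsUnit (1 + t * b) := fun b =>
    IsNilpotent.isUnit_one_add ⟨2, by linear_combination b ^ 2 * ht⟩
  let f : (ZMod (p ^ (k + 1)))ˣ × (Fin m → ZMod (p ^ (k + 1))) → ℂ := fun w =>
    ZMod.stdAddChar ((w.1 : ZMod (p ^ (k + 1))) * MvPolynomial.aeval w.2 F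
      + ∑ i, (c i : ZMod (p ^ (k + 1))) * w.2 i)
  let σ : ZMod (p ^ (k + 1)) × (Fin m → ZMod (p ^ (k + 1))) →
      (ZMod (p ^ (k + 1)))ˣ × (Fin m → ZMod (p ^ (k + 1))) ≃
        (ZMod (p ^ (k + 1)))ˣ × (Fin m → ZMod (p ^ (k + 1))) := fun q =>
    (Equiv.mulRight (hunit q.1).unit).prodCongr (Equiv.addRight (fun i => t * q.2 i))
  have hshift : ∀ q w, f (σ q w) = f w * ZMod.stdAddChar
      ((t * ((w.1 : ZMod (p ^ (k + 1))) * MvPolynomial.aeval w.2 F)) * q.1 + ∑ i,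
        (t * ((w.1 : ZMod (p ^ (k + 1))) *
          MvPolynomial.aeval w.2 (MvPolynomial.pderiv i F) + c i)) * q.2 i) := by
    rintro ⟨b, y⟩ ⟨a, x⟩
    have hx : (x + fun i => t * y i) = fun i => x i + t * y i := rfl
    simp only [f, σ, Equiv.prodCongr_apply, Prod.map, Equiv.coe_mulRight, Equiv.coe_addRight,
      Units.val_mul, IsUnit.unit_spec, ← AddChar.map_add_eq_mul, hx,
      aeval_add_of_sq_zero F x y t ht]
    congr 1
    have s1 : ∑ i, (c i : ZMod (p ^ (k + 1))) * (x i + t * y i) =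
        ∑ i, (c i : ZMod (p ^ (k + 1))) * x i +
          t * ∑ i, (c i : ZMod (p ^ (k + 1))) * y i := by
      rw [Finset.mul_sum, ← Finset.sum_add_distrib]
      exact Finset.sum_congr rfl fun i _ => by ring
    have s2 : ∑ i, (t * (a * MvPolynomial.aeval x (MvPolynomial.pderiv i F) + c i)) * y i =
        t * (a * ∑ i, MvPolynomial.aeval x (MvPolynomial.pderiv i F) * y i +
          ∑ i, (c i : ZMod (p ^ (k + 1))) * y i) := by
      rw [Finset.mul_sum, ← Finset.sum_add_distrib, Finset.mul_sum]
      exact Finset.sum_congr rfl fun i _ => by ring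
    rw [s1, s2]
    linear_combination
      a * b * (∑ i, MvPolynomial.aeval x (MvPolynomial.pderiv i F) * y i) * ht
  have hdouble : ∑ q, ∑ w, f (σ q w) = 0 := by
    rw [Finset.sum_comm]
    refine Finset.sum_eq_zero fun w _ => ?_
    simp only [hshift]
    rw [← Finset.mul_sum, sum_linear_eq_zero _ _ (hcoef w.1 w.2), mul_zero]
  simp only [Equiv.sum_comp, Finset.sum_const, Finset.card_univ, nsmul_eq_mul] at hdouble
  have hS := (mul_eq_zero.mp hdouble).resolve_left (Nat.cast_ne_zero.mpr Fintype.card_ne_zero)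
  rw [← hS, Fintype.sum_prod_type]
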